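/- (Lemma 1) Let q > 1 be an integer and let g : [0,1/2] → ℝ be continuous and differentiable on (0,1/2) with |g|₁ = sup_{t∈(0,1/2)} |g′(t)| < ∞. Then sup_{t∈[0,1/2]} |L_q(g)(t) − g(t)| ≤ ((1 + μ_q)/(4q)) · |g|₁, where μ_q = (1/π) Σ_{j=0}^{q−1} cot((j + 1/2)π/(2q)). -/

import Mathlib

/-- The Chebyshev interpolation nodes on `[0,1/2]`:
`t_k = (cos((2k+1)π/(2q)) + 1)/4`, `k = 0, …, q-1`. -/
noncomputable def chebNode (q : ℕ) (k : Fin q) : ℝ :=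
  (Real.cos ((2 * (k : ℝ) + 1) * Real.pi / (2 * q)) + 1) / 4

/-- The Lagrange–Chebyshev interpolation operator `L_q`: the unique polynomial of
degree at most `q - 1` agreeing with `h` at the `q` Chebyshev nodes on `[0,1/2]`. -/
noncomputable def Lcheb (q : ℕ) (h : ℝ → ℝ) : ℝ → ℝ := fun t =>
  (Lagrange.interpolate (Finset.univ : Finset (Fin q)) (chebNode q)
    (fun k => h (chebNode q k))).eval t

/-- The Lebesgue-type constant `μ_q = (1/π) Σ_{j=0}^{q-1} cot((j+1/2)π/(2q))`. -/
noncomputable def muq (q : ℕ) : ℝ :=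
  (1 / Real.pi) * ∑ j ∈ Finset.range q, Real.cot ((((j : ℝ) + 1 / 2) * Real.pi) / (2 * q))

open Polynomial in
theorem cheb_nodal_eq (q : ℕ) (hq : 1 < q) (hinj : Set.InjOn (chebNode q) (Finset.univ : Finset (Fin q))) :
    ∃ c : ℝ, c ≠ 0 ∧ (Polynomial.Chebyshev.T ℝ q).comp (C 4 * X - 1) =
      C c * Lagrange.nodal (Finset.univ : Finset (Fin q)) (chebNode q) := by
  set Q := (Polynomial.Chebyshev.T ℝ q).comp (C 4 * X - 1) with hQ
  have hlin : (C (4:ℝ) * X - 1).natDegree = 1 := by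
    have := natDegree_linear (R := ℝ) (a := 4) (b := -1) (by norm_num)
    simpa [sub_eq_add_neg] using this
  have hdeg : Q.natDegree = q := by
    rw [hQ, natDegree_comp, hlin, Polynomial.Chebyshev.natDegree_T]; simp
  have hQ0 : Q ≠ 0 := by
    intro h; rw [h] at hdeg; simp at hdeg; omega
  have hc : Q.leadingCoeff ≠ 0 := leadingCoeff_ne_zero.mpr hQ0
  refine ⟨Q.leadingCoeff, hc, ?_⟩
  have hd : Q.degree = (C Q.leadingCoeff * Lagrange.nodal (Finset.univ : Finset (Fin q)) (chebNode q)).degree := by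
    rw [degree_C_mul hc, Lagrange.degree_nodal, degree_eq_natDegree hQ0, hdeg]; simp
  refine Polynomial.eq_of_degree_sub_lt_of_eval_index_eq (Finset.univ : Finset (Fin q)) hinj ?_ ?_
  · have := degree_sub_lt_left hd hQ0 (by
      rw [leadingCoeff_mul, leadingCoeff_C, Lagrange.nodal_monic.leadingCoeff, mul_one])
    rw [degree_eq_natDegree hQ0, hdeg] at this
    simpa using this
  · intro i _
    rw [eval_mul, Lagrange.eval_nodal_at_node (Finset.mem_univ i), mul_zero, hQ, eval_comp]
    have : eval (chebNode q i) (C (4:ℝ) * X - 1) = Real.cos ((2 * (i : ℝ) + 1) * Real.pi / (2 * q)) := by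
      simp [chebNode]; ring
    rw [this, Polynomial.Chebyshev.T_real_cos]
    rw [Real.cos_eq_zero_iff]
    refine ⟨i, ?_⟩
    have : (q:ℝ) ≠ 0 := by positivity
    push_cast
    field_simp

theorem cheb_angle_mem (q : ℕ) (hq : 1 < q) (k : Fin q) :
    0 < (2 * (k : ℝ) + 1) * Real.pi / (2 * q) ∧ (2 * (k : ℝ) + 1) * Real.pi / (2 * q) < Real.pi := by
  have hq0 : (0:ℝ) < q := by positivity
  have hk : (k:ℝ) + 1 ≤ q := by exact_mod_cast k.2
  refine ⟨by positivity, ?_⟩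
  rw [div_lt_iff₀ (by positivity)]
  nlinarith [Real.pi_pos]

theorem cheb_inj (q : ℕ) (hq : 1 < q) :
    Set.InjOn (chebNode q) (Finset.univ : Finset (Fin q)) := by
  intro i _ j _ h
  have hi := cheb_angle_mem q hq i
  have hj := cheb_angle_mem q hq j
  have h1 : Real.cos ((2 * (i : ℝ) + 1) * Real.pi / (2 * q)) = Real.cos ((2 * (j : ℝ) + 1) * Real.pi / (2 * q)) := by
    unfold chebNode at h; linarith
  have h2 := Real.injOn_cos ⟨hi.1.le, hi.2.le⟩ ⟨hj.1.le, hj.2.le⟩ h1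
  have hq0 : (q:ℝ) ≠ 0 := by positivity
  have hp := Real.pi_ne_zero
  field_simp at h2
  have h3 : (i:ℝ) = j := by linarith
  exact Fin.ext (by exact_mod_cast h3)

open Polynomial in
theorem cheb_weight_bound (q : ℕ) (hq : 1 < q) (t : ℝ) (ht : t ∈ Set.Icc (0:ℝ) (1/2)) (k : Fin q) :
    |eval t (Lagrange.nodal (Finset.univ : Finset (Fin q)) (chebNode q)) *
      Lagrange.nodalWeight (Finset.univ : Finset (Fin q)) (chebNode q) k| ≤
      Real.sin ((2 * (k : ℝ) + 1) * Real.pi / (2 * q)) / (4 * q) := by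
  obtain ⟨c, hc, hQ⟩ := cheb_nodal_eq q hq (cheb_inj q hq)
  have hθ := cheb_angle_mem q hq k
  have hq0 : (0:ℝ) < q := by positivity
  have hs := Real.sin_pos_of_pos_of_lt_pi hθ.1 hθ.2
  have hU := Polynomial.Chebyshev.U_real_cos ((2 * (k : ℝ) + 1) * Real.pi / (2 * q)) ((q:ℤ) - 1)
  have hnode : 4 * chebNode q k - 1 = Real.cos ((2 * (k : ℝ) + 1) * Real.pi / (2 * q)) := by
    simp [chebNode]; ring
  have hangle : (((q:ℤ) - 1 : ℤ) + 1 : ℝ) * ((2 * (k : ℝ) + 1) * Real.pi / (2 * q)) = k * Real.pi + Real.pi / 2 := by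
    push_cast; field_simp; ring
  have hd := congrArg (fun p => eval (chebNode q k) (derivative p)) hQ
  simp only [derivative_comp, Polynomial.Chebyshev.T_derivative_eq_U] at hd
  simp [hnode] at hd
  have h1 := congrArg (eval t) hQ
  simp at h1
  have hT : |eval (4 * t - 1) (Polynomial.Chebyshev.T ℝ q)| ≤ 1 :=
    Polynomial.Chebyshev.abs_eval_T_real_le_one _ (by rw [abs_le]; constructor <;> linarith [ht.1, ht.2])
  rw [hangle, Real.sin_add_pi_div_two] at hU
  have hcos : |Real.cos (k * Real.pi)| = 1 := by
    have := Real.abs_cos_int_mul_pi k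
    simpa using this
  rw [← hU, abs_mul, abs_of_pos hs] at hcos
  rw [Lagrange.nodalWeight_eq_eval_derivative_nodal (Finset.mem_univ k)]
  set D := eval (chebNode q k) (derivative (Lagrange.nodal (Finset.univ : Finset (Fin q)) (chebNode q)))
  set N := eval t (Lagrange.nodal (Finset.univ : Finset (Fin q)) (chebNode q))
  set s := Real.sin ((2 * (k : ℝ) + 1) * Real.pi / (2 * q))
  set u := eval (Real.cos ((2 * (k : ℝ) + 1) * Real.pi / (2 * q))) (Polynomial.Chebyshev.U ℝ (q - 1))
  have hD : |c| * |D| = 4 * q / s := by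
    rw [← abs_mul, ← hd, abs_mul, abs_mul, Nat.abs_cast, eq_div_iff hs.ne']
    simp only [abs_of_pos (show (0:ℝ) < 4 by norm_num)]
    rw [mul_assoc, mul_assoc, hcos]; ring
  rw [h1, abs_mul] at hT
  have hcp : 0 < |c| := abs_pos.mpr hc
  have hDp : 0 < |D| := by
    have : 0 < |c| * |D| := by rw [hD]; positivity
    exact pos_of_mul_pos_right this hcp.le
  rw [abs_mul, abs_inv, ← div_eq_mul_inv, div_le_iff₀ hDp]
  rw [eq_div_iff hs.ne'] at hD
  rw [div_mul_eq_mul_div, le_div_iff₀ (by positivity)]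
  calc |N| * (4 * q) = (|c| * |N|) * (s * |D|) := by rw [← hD]; ring
    _ ≤ 1 * (s * |D|) := by gcongr
    _ = _ := by ring

theorem sum_sin_odd (n : ℕ) (b : ℝ) :
    (∑ k ∈ Finset.range n, Real.sin ((2 * (k:ℝ) + 1) * b)) * Real.sin b = Real.sin (n * b) ^ 2 := by
  induction n with
  | zero => simp
  | succ n ih =>
    rw [Finset.sum_range_succ, add_mul, ih]
    have e1 : (2 * (n:ℝ) + 1) * b = n * b + (n * b + b) := by ring
    have e2 : ((n + 1 : ℕ) : ℝ) * b = n * b + b := by push_cast; ring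
    rw [e1, e2]
    simp only [Real.sin_add, Real.cos_add]
    have h1 := Real.sin_sq_add_cos_sq (n * b)
    have h2 := Real.sin_sq_add_cos_sq b
    generalize Real.sin (n * b) = S at *
    generalize Real.cos (n * b) = C at *
    generalize Real.sin b = s at *
    generalize Real.cos b = c at *
    linear_combination (-S^2) * h2

theorem cot_lower (x : ℝ) (hx : 0 < x) (hx2 : x ≤ Real.pi / 2) : 1 / x - x / 2 ≤ Real.cot x := by
  have hs : 0 < Real.sin x := Real.sin_pos_of_pos_of_lt_pi hx (by linarith [Real.pi_pos])
  have hc : 0 ≤ Real.cos x := Real.cos_nonneg_of_neg_pi_div_two_le_of_le (by linarith) hx2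
  rw [Real.cot_eq_cos_div_sin]
  calc 1 / x - x / 2 = (1 - x^2/2) / x := by field_simp
    _ ≤ Real.cos x / x := by gcongr; exact Real.one_sub_sq_div_two_le_cos
    _ ≤ Real.cos x / Real.sin x := by gcongr; exact Real.sin_le hx.le

theorem inv_sin_upper (a : ℝ) (ha : 0 < a) (ha1 : a < 1) :
    1 / Real.sin (2 * a) ≤ 1 / (2 * a * (1 - a ^ 2)) := by
  have : 0 < 1 - a^2 := by nlinarith
  apply one_div_le_one_div_of_le (by positivity)
  have := Real.sin_gt_sub_cube (x := 2 * a) (by linarith)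
  nlinarith [pow_pos ha 3]

theorem mu_bound (q : ℕ) (hq : 1 < q) : 1 / Real.sin (Real.pi / (2 * q)) ≤ 1 + muq q := by
  have hq0 : (0:ℝ) < q := by positivity
  obtain ⟨a, ha⟩ : ∃ a : ℝ, a = Real.pi / (4 * q) := ⟨_, rfl⟩
  have hp := Real.pi_pos
  have hp1 := Real.pi_gt_d2
  have hp2 := Real.pi_lt_d2
  have hap : 0 < a := by rw [ha]; positivity
  have haq : a * (4 * q) = Real.pi := by rw [ha]; field_simp
  have h2a : Real.pi / (2 * q) = 2 * a := by rw [ha]; field_simp; norm_num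
  have hx : ∀ j : ℕ, (((j : ℝ) + 1 / 2) * Real.pi) / (2 * q) = (2 * j + 1) * a := by
    intro j; rw [ha]; field_simp; ring
  have hle : ∀ j < q, (2 * (j:ℝ) + 1) * a ≤ Real.pi / 2 := by
    intro j hj
    have : (j:ℝ) + 1 ≤ q := by exact_mod_cast hj
    nlinarith
  have hterm : ∀ j < q, 1 / ((2 * (j:ℝ) + 1) * a) - ((2 * (j:ℝ) + 1) * a) / 2 ≤ Real.cot ((2 * (j:ℝ) + 1) * a) :=
    fun j hj => cot_lower _ (by positivity) (hle j hj)
  have hnn : ∀ j < q, 0 ≤ Real.cot ((2 * (j:ℝ) + 1) * a) := by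
    intro j hj
    rw [Real.cot_eq_cos_div_sin]
    have h0 : 0 < (2 * (j:ℝ) + 1) * a := by positivity
    have := hle j hj
    exact div_nonneg (Real.cos_nonneg_of_neg_pi_div_two_le_of_le (by linarith) this)
      (Real.sin_nonneg_of_nonneg_of_le_pi h0.le (by linarith))
  have hN : ∀ N ≤ q, ∑ j ∈ Finset.range N, (1 / ((2 * (j:ℝ) + 1) * a) - ((2 * (j:ℝ) + 1) * a) / 2) ≤
      ∑ j ∈ Finset.range q, Real.cot ((2 * (j:ℝ) + 1) * a) := by
    intro N hN
    refine (Finset.sum_le_sum fun j hj => hterm j (lt_of_lt_of_le (Finset.mem_range.mp hj) hN)).trans ?_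
    exact Finset.sum_le_sum_of_subset_of_nonneg (Finset.range_subset_range.mpr hN)
      fun j hj _ => hnn j (Finset.mem_range.mp hj)
  have ha8 : a < 0.394 := by
    have : (2:ℝ) ≤ q := by exact_mod_cast hq
    nlinarith
  unfold muq
  simp only [hx]
  rw [h2a]
  refine (inv_sin_upper a hap (by linarith)).trans ?_
  suffices h : Real.pi * (1 / (2 * a * (1 - a ^ 2))) ≤ Real.pi + ∑ j ∈ Finset.range q, Real.cot ((2 * (j:ℝ) + 1) * a) by
    rw [show (1:ℝ) + 1 / Real.pi * ∑ j ∈ Finset.range q, Real.cot ((2 * (j:ℝ) + 1) * a) =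
      (Real.pi + ∑ j ∈ Finset.range q, Real.cot ((2 * (j:ℝ) + 1) * a)) / Real.pi by rw [add_div, div_self hp.ne']; ring]
    rw [le_div_iff₀ hp]; linarith
  rcases le_or_gt 4 q with h4 | h4
  · have hS := hN 4 h4
    refine le_trans ?_ (add_le_add_right hS _)
    have ha16 : a < 0.197 := by
      have : (4:ℝ) ≤ q := by exact_mod_cast h4
      nlinarith
    have hpos : 0 < 1 - a^2 := by nlinarith
    have e : ∑ j ∈ Finset.range 4, (1 / ((2 * (j:ℝ) + 1) * a) - ((2 * (j:ℝ) + 1) * a) / 2) = (176/105) / a - 8 * a := by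
      simp [Finset.sum_range_succ]; field_simp; ring
    rw [e]
    have h1 : Real.pi * (1 / (2 * a * (1 - a ^ 2))) ≤ (176/105) / a := by
      rw [mul_one_div, div_le_div_iff₀ (by positivity) hap]
      have : Real.pi ≤ 176/105 * (2 * (1 - a^2)) := by nlinarith
      nlinarith
    linarith
  · have hS := hN 2 (by omega)
    refine le_trans ?_ (add_le_add_right hS _)
    have ha12 : 0.26 < a := by
      have : (q:ℝ) ≤ 3 := by exact_mod_cast (by omega : q ≤ 3)
      nlinarith
    have hpos : 0 < 1 - a^2 := by nlinarith
    have e : ∑ j ∈ Finset.range 2, (1 / ((2 * (j:ℝ) + 1) * a) - ((2 * (j:ℝ) + 1) * a) / 2) = (4/3) / a - 2 * a := by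
      simp [Finset.sum_range_succ]; field_simp; ring
    rw [e]
    have h2 : (3.14:ℝ) + ((4/3) / a - 2 * a) = (3.14 * a + 4/3 - 2 * a^2) / a := by field_simp; ring
    have h1 : Real.pi * (1 / (2 * a * (1 - a ^ 2))) ≤ (3.14:ℝ) + ((4/3) / a - 2 * a) := by
      rw [h2, mul_one_div, div_le_div_iff₀ (by positivity) hap]
      have h5 : 1.96 ≤ 3.14 * a + 4/3 - 2 * a^2 := by nlinarith
      have h6 : 0.84 ≤ 1 - a^2 := by nlinarith
      have : Real.pi ≤ (3.14 * a + 4/3 - 2 * a^2) * (2 * (1 - a^2)) := by nlinarith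
      nlinarith
    linarith

theorem lip_of_deriv (g : ℝ → ℝ) (B : ℝ)
    (hgc : ContinuousOn g (Set.Icc 0 (1 / 2)))
    (hg : ∀ t ∈ Set.Ioo (0 : ℝ) (1 / 2), DifferentiableAt ℝ g t ∧ |deriv g t| ≤ B)
    (x y : ℝ) (hx : 0 ≤ x) (hy : y ≤ 1/2) (hxy : x < y) : |g y - g x| ≤ B * |y - x| := by
  obtain ⟨c, hc, h⟩ := exists_deriv_eq_slope g hxy (hgc.mono (Set.Icc_subset_Icc hx hy))
    (fun z hz => (hg z ⟨by linarith [hz.1], by linarith [hz.2]⟩).1.differentiableWithinAt)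
  have := (hg c ⟨by linarith [hc.1], by linarith [hc.2]⟩).2
  rw [eq_div_iff (by linarith)] at h
  rw [← h, abs_mul]
  gcongr

/-- Lemma 1: for an integer `q > 1` and a continuous
`g : [0,1/2] → ℝ` differentiable on `(0,1/2)` with `|g'| ≤ B` there,
`sup_{[0,1/2]} |L_q(g) - g| ≤ ((1 + μ_q)/(4q)) B`. -/
theorem lagrange_chebyshev_error_bound
    (q : ℕ) (hq : 1 < q) (g : ℝ → ℝ) (B : ℝ)
    (hgc : ContinuousOn g (Set.Icc 0 (1 / 2)))
    (hg : ∀ t ∈ Set.Ioo (0 : ℝ) (1 / 2), DifferentiableAt ℝ g t ∧ |deriv g t| ≤ B) :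
    ∀ t ∈ Set.Icc (0 : ℝ) (1 / 2),
      |Lcheb q g t - g t| ≤ ((1 + muq q) / (4 * q)) * B := by
  intro t ht
  have hq0 : (0:ℝ) < q := by positivity
  have hB : 0 ≤ B := (abs_nonneg _).trans (hg (1/4) ⟨by norm_num, by norm_num⟩).2
  have hb : 0 < Real.sin (Real.pi / (2 * q)) := by
    have := cheb_angle_mem q hq ⟨0, by omega⟩
    simp at this
    exact Real.sin_pos_of_pos_of_lt_pi (by positivity) this.2
  have hmu := mu_bound q hq
  have hmu0 : 0 ≤ 1 + muq q := le_trans (by positivity) hmu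
  have hinj := cheb_inj q hq
  have hlip : ∀ k : Fin q, |g (chebNode q k) - g t| ≤ B * |t - chebNode q k| := by
    intro k
    have hn0 : 0 ≤ chebNode q k := by
      unfold chebNode; linarith [Real.neg_one_le_cos ((2 * (k : ℝ) + 1) * Real.pi / (2 * q))]
    have hn1 : chebNode q k ≤ 1/2 := by
      unfold chebNode; linarith [Real.cos_le_one ((2 * (k : ℝ) + 1) * Real.pi / (2 * q))]
    rcases lt_trichotomy t (chebNode q k) with h | h | h
    · rw [abs_sub_comm t]; exact lip_of_deriv g B hgc hg _ _ ht.1 hn1 h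
    · rw [← h]; simp
    · rw [abs_sub_comm (g _)]; exact lip_of_deriv g B hgc hg _ _ hn0 ht.2 h
  by_cases hnode : ∃ k, t = chebNode q k
  · obtain ⟨k, rfl⟩ := hnode
    unfold Lcheb
    rw [Lagrange.eval_interpolate_at_node _ hinj (Finset.mem_univ k)]
    simp only [sub_self, abs_zero]
    positivity
  push Not at hnode
  have hone := Lagrange.eval_interpolate_not_at_node (s := (Finset.univ : Finset (Fin q)))
    (v := chebNode q) (fun _ => (1:ℝ)) (x := t) (fun i _ => hnode i)
  have hone' : (Lagrange.interpolate (Finset.univ : Finset (Fin q)) (chebNode q)) (fun _ => (1:ℝ)) = 1 :=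
    Lagrange.interpolate_one hinj ⟨⟨0, by omega⟩, Finset.mem_univ _⟩
  rw [hone', Polynomial.eval_one] at hone
  unfold Lcheb
  rw [Lagrange.eval_interpolate_not_at_node _ (fun i _ => hnode i)]
  have e : ∀ N : ℝ, ∀ w : Fin q → ℝ, 1 = N * ∑ i, w i * (t - chebNode q i)⁻¹ * 1 →
      N * ∑ i, w i * (t - chebNode q i)⁻¹ * g (chebNode q i) - g t =
      ∑ i, (N * w i) * ((t - chebNode q i)⁻¹ * (g (chebNode q i) - g t)) := by
    intro N w h
    have : g t = N * (∑ i, w i * (t - chebNode q i)⁻¹ * 1) * g t := by rw [← h, one_mul]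
    conv_lhs => rw [this]
    rw [Finset.mul_sum, Finset.mul_sum, Finset.sum_mul, ← Finset.sum_sub_distrib]
    exact Finset.sum_congr rfl fun i _ => by ring
  rw [e _ _ hone]
  calc _ ≤ ∑ k : Fin q, Real.sin ((2 * (k : ℝ) + 1) * Real.pi / (2 * q)) / (4 * q) * B := by
        refine (Finset.abs_sum_le_sum_abs _ _).trans (Finset.sum_le_sum fun k _ => ?_)
        rw [abs_mul]
        have h1 := cheb_weight_bound q hq t ht k
        refine mul_le_mul h1 ?_ (abs_nonneg _) ((abs_nonneg _).trans h1)
        have hpos : 0 < |t - chebNode q k| := abs_pos.mpr (sub_ne_zero.mpr (hnode k))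
        rw [abs_mul, abs_inv, inv_mul_le_iff₀ hpos]
        linarith [hlip k]
    _ = (∑ k ∈ Finset.range q, Real.sin ((2 * (k : ℝ) + 1) * (Real.pi / (2 * q)))) / (4 * q) * B := by
        rw [← Fin.sum_univ_eq_sum_range (fun k => Real.sin ((2 * (k : ℝ) + 1) * (Real.pi / (2 * q)))) q, Finset.sum_div, Finset.sum_mul]
        simp only [mul_div_assoc]
    _ = (1 / Real.sin (Real.pi / (2 * q))) / (4 * q) * B := by
        have := sum_sin_odd q (Real.pi / (2 * q))
        rw [show (q:ℝ) * (Real.pi / (2 * q)) = Real.pi / 2 by field_simp, Real.sin_pi_div_two, one_pow,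
          ← eq_div_iff hb.ne'] at this
        rw [this]
    _ ≤ _ := by gcongr
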